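/- (Itô-like lemma for convex functions.) Let f : ℝ^d → ℝ be a convex function of at most linear growth, p : ℝ^d → ℝ^d a subgradient selection, and Q(x) the matrix of Radon–Nikodym derivatives of the absolutely continuous parts of the second derivative measures of f. Then for Lebesgue-almost every x ∈ ℝ^d: lim_{t → 0⁺} (1/t) ∫_{ℝ^d} |f(x + y) − f(x) − ⟨p(x), y⟩ − (1/2)⟨Q(x) y, y⟩| · φ_t(y) dy = 0, where φ_t(y) = (2πt)^{−d/2} exp(−‖y‖²/(2t)). -/

import Mathlib

open MeasureTheory Filter Metric
open scoped Topology ENNReal NNReal RealInnerProductSpace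

/-- The `d`-dimensional Gaussian heat kernel `φ_t`. -/
noncomputable def heatKernel (d : ℕ) (t : ℝ) (y : EuclideanSpace ℝ (Fin d)) : ℝ :=
  (2 * Real.pi * t) ^ (-(d : ℝ) / 2) * Real.exp (-‖y‖ ^ 2 / (2 * t))

/-- The second partial derivative `∂_i ∂_j φ` at `x`. -/
noncomputable def secondPartial (d : ℕ) (φ : EuclideanSpace ℝ (Fin d) → ℝ)
    (i j : Fin d) (x : EuclideanSpace ℝ (Fin d)) : ℝ :=
  fderiv ℝ (fun z => fderiv ℝ φ z (EuclideanSpace.single j 1)) x (EuclideanSpace.single i 1)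

/-- `μp, μn` represent the (signed) second derivative measures `μ_{ij} = μp i j - μn i j`
of the function `g`. -/
def IsSecondDerivMeasures (d : ℕ) (g : EuclideanSpace ℝ (Fin d) → ℝ)
    (μp μn : Fin d → Fin d → Measure (EuclideanSpace ℝ (Fin d))) : Prop :=
  (∀ i j, IsLocallyFiniteMeasure (μp i j)) ∧ (∀ i j, IsLocallyFiniteMeasure (μn i j)) ∧
  ∀ i j, ∀ φ : EuclideanSpace ℝ (Fin d) → ℝ, ContDiff ℝ (⊤ : ℕ∞) φ → HasCompactSupport φ →
    (∫ x, φ x ∂(μp i j)) - (∫ x, φ x ∂(μn i j)) = ∫ x, g x * secondPartial d φ i j x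

/-- The matrix of Radon–Nikodym derivatives of the absolutely continuous parts of the
second derivative measures. -/
noncomputable def densityMatrix (d : ℕ)
    (μp μn : Fin d → Fin d → Measure (EuclideanSpace ℝ (Fin d)))
    (x : EuclideanSpace ℝ (Fin d)) : Matrix (Fin d) (Fin d) ℝ :=
  Matrix.of fun i j =>
    ((μp i j).rnDeriv volume x).toReal - ((μn i j).rnDeriv volume x).toReal

/-- The quadratic form `⟨M y, y⟩` of a matrix `M`. -/
noncomputable def quadForm (d : ℕ) (M : Matrix (Fin d) (Fin d) ℝ)
    (y : EuclideanSpace ℝ (Fin d)) : ℝ :=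
  ∑ i, ∑ j, M i j * y i * y j

/-!
The heart of the matter is Alexandrov's theorem: for almost every `x`, every subgradient `v` of `f`
at `x` satisfies `f (x + y) = f x + ⟪v, y⟫ + ⟪Q x y, y⟫ / 2 + o(‖y‖²)`.

Let `f_ε` be the mollification of `f` by an even kernel at scale `ε`. Its second derivatives are
integrals of the kernel against the measures `μ_ij`, so by Besicovitch differentiation of measures
those of `f_{δr}` at points within `r` of `x` tend to `Q x` as `r → 0`, for almost every `x` and
each fixed `δ > 0`. This gives a second order expansion of `f_{δr}` on the ball of radius `r`, with
error `o(r²)`. Evenness of the kernel bounds `f_ε` at a point by the constant term of any affine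
majorant of `f` on the `ε`-ball around it, and together with convexity yields `f ≤ f_ε`. Comparing
the scales `r` and `r / 2` in this way gives `f_r x - f x = O(r²)`; since `f - ⟪v, ·⟫` is minimal at
`x`, also `∇f_r x - v = O(r)`, and then `f - f x - ⟪v, · - x⟫ = O(r²)` on the ball of radius `r`. By
convexity `f_{δr} - f = O(δ r²)` there, so letting first `r → 0` and then `δ → 0` transfers the
expansion to `f`.

Finally, the second moment of `φ_t` is `O(t)`, while away from the origin `φ_t` is at most an
exponentially small multiple of `φ_s` for a fixed `s > 0`; hence an `o(‖y‖²)` function integrable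
against `φ_s` has integral `o(t)` against `φ_t`.
-/

section Kernels

variable {X : Type*} [MetricSpace X] [MeasurableSpace X]

/-- A continuous probability density `η` supported in the closed ball of radius `s` around `x`
and bounded by `c` times the uniform density of that ball. -/
structure IsBallKernel (ν : Measure X) (c : ℝ) (x : X) (s : ℝ) (η : X → ℝ) : Prop where
  continuous : Continuous η
  nonneg : ∀ w, 0 ≤ η w
  integral_eq_one : ∫ w, η w ∂ν = 1
  support_subset : Function.support η ⊆ closedBall x s
  le_div : ∀ w, η w ≤ c / ν.real (closedBall x s)

/-- The filter along which a ball kernel shrinks to `x`. Its elements are pairs `(s, η)` so that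
the radius `s` is available; all kernels of a given radius are treated uniformly. -/
def shrinkingKernels (ν : Measure X) (c : ℝ) (x : X) : Filter (ℝ × (X → ℝ)) :=
  comap Prod.fst (𝓝[>] 0) ⊓ 𝓟 {k | IsBallKernel ν c x k.1 k.2}

theorem eventually_shrinkingKernels {ν : Measure X} {c : ℝ} {x : X} {P : (X → ℝ) → Prop} :
    (∀ᶠ k in shrinkingKernels ν c x, P k.2) ↔
      ∀ᶠ s in 𝓝[>] (0 : ℝ), ∀ η, IsBallKernel ν c x s η → P η := by
  simp only [shrinkingKernels, eventually_inf_principal, eventually_comap, Prod.forall]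
  exact eventually_congr (.of_forall fun s =>
    ⟨fun h η hη => h s η rfl hη, fun h _ η hs hη => h η (hs ▸ hη)⟩)

theorem eventually_isBallKernel_shrinkingKernels (ν : Measure X) (c : ℝ) (x : X) :
    ∀ᶠ k in shrinkingKernels ν c x, IsBallKernel ν c x k.1 k.2 :=
  mem_inf_of_right (mem_principal_self _)

theorem tendsto_fst_shrinkingKernels (ν : Measure X) (c : ℝ) (x : X) :
    Tendsto Prod.fst (shrinkingKernels ν c x) (𝓝[>] 0) :=
  tendsto_comap.mono_left inf_le_left

variable [ProperSpace X] {ν : Measure X} {c : ℝ} {x : X} {s : ℝ} {η : X → ℝ}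

namespace IsBallKernel

theorem hasCompactSupport (h : IsBallKernel ν c x s η) : HasCompactSupport η :=
  .of_support_subset_isCompact (isCompact_closedBall x s) h.support_subset

variable [BorelSpace X]

theorem integrable (h : IsBallKernel ν c x s η) (μ : Measure X) [IsLocallyFiniteMeasure μ] :
    Integrable η μ :=
  h.continuous.integrable_of_hasCompactSupport h.hasCompactSupport

theorem integral_le (h : IsBallKernel ν c x s η) (μ : Measure X) [IsLocallyFiniteMeasure μ] :
    ∫ w, η w ∂μ ≤ c * (μ (closedBall x s) / ν (closedBall x s)).toReal := by
  calc ∫ w, η w ∂μ = ∫ w in closedBall x s, η w ∂μ :=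
        (setIntegral_eq_integral_of_forall_compl_eq_zero fun w hw =>
          Function.notMem_support.1 fun hw' => hw (h.support_subset hw')).symm
    _ ≤ ∫ _ in closedBall x s, c / ν.real (closedBall x s) ∂μ :=
        setIntegral_mono (h.integrable μ).integrableOn
          (integrableOn_const measure_closedBall_lt_top.ne) h.le_div
    _ = c * (μ (closedBall x s) / ν (closedBall x s)).toReal := by
        rw [setIntegral_const, smul_eq_mul, ENNReal.toReal_div, measureReal_def, measureReal_def]
        ring

end IsBallKernel

variable [BorelSpace X]

theorem locallyIntegrable_toReal_rnDeriv (μ ν : Measure X) [IsLocallyFiniteMeasure μ] :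
    LocallyIntegrable (fun w => (μ.rnDeriv ν w).toReal) ν := by
  refine locallyIntegrable_iff.2 fun K hK =>
    integrable_toReal_of_lintegral_ne_top (Measure.measurable_rnDeriv μ ν).aemeasurable ?_
  exact ((Measure.setLIntegral_rnDeriv_le K).trans_lt hK.measure_lt_top).ne

theorem IsBallKernel.integral_eq_add [IsLocallyFiniteMeasure ν] (h : IsBallKernel ν c x s η)
    (μ : Measure X) [IsLocallyFiniteMeasure μ] :
    ∫ w, η w ∂μ =
      ∫ w, η w ∂(μ.singularPart ν) + ∫ w, η w • (μ.rnDeriv ν w).toReal ∂ν := by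
  have : IsLocallyFiniteMeasure (μ.singularPart ν) :=
    Measure.isLocallyFiniteMeasure_of_le (Measure.singularPart_le μ ν)
  have : IsLocallyFiniteMeasure (ν.withDensity (μ.rnDeriv ν)) :=
    Measure.isLocallyFiniteMeasure_of_le (Measure.withDensity_rnDeriv_le μ ν)
  conv_lhs => rw [μ.haveLebesgueDecomposition_add ν]
  rw [integral_add_measure (h.integrable _) (h.integrable _),
    integral_withDensity_eq_integral_toReal_smul (Measure.measurable_rnDeriv μ ν)
      (Measure.rnDeriv_lt_top μ ν)]
  simp only [smul_eq_mul, mul_comm]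

variable [HasBesicovitchCovering X] [IsLocallyFiniteMeasure ν]

theorem ae_tendsto_integral_shrinkingKernels_of_mutuallySingular {μ : Measure X}
    [IsLocallyFiniteMeasure μ] (hμ : μ ⟂ₘ ν) :
    ∀ᵐ x ∂ν, ∀ c, Tendsto (fun k => ∫ w, k.2 w ∂μ) (shrinkingKernels ν c x) (𝓝 0) := by
  filter_upwards [(Besicovitch.vitaliFamily ν).ae_eventually_measure_zero_of_singular hμ]
    with x hx c
  have hratio : Tendsto (fun s => c * (μ (closedBall x s) / ν (closedBall x s)).toReal) (𝓝[>] 0)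
      (𝓝 0) := by
    simpa using ((ENNReal.tendsto_toReal ENNReal.zero_ne_top).comp
      (hx.comp (Besicovitch.tendsto_filterAt ν x))).const_mul c
  refine squeeze_zero' ?_ ?_ (hratio.comp (tendsto_fst_shrinkingKernels ν c x))
  · filter_upwards [eventually_isBallKernel_shrinkingKernels ν c x] with k hk
    exact integral_nonneg hk.nonneg
  · filter_upwards [eventually_isBallKernel_shrinkingKernels ν c x] with k hk
    exact hk.integral_le μ

theorem ae_tendsto_integral_smul_shrinkingKernels {ρ : X → ℝ} (hρ : LocallyIntegrable ρ ν) :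
    ∀ᵐ x ∂ν, ∀ c,
      Tendsto (fun k => ∫ w, k.2 w • ρ w ∂ν) (shrinkingKernels ν c x) (𝓝 (ρ x)) := by
  filter_upwards [(Besicovitch.vitaliFamily ν).ae_tendsto_average_norm_sub hρ] with x hx c
  have hkernel := eventually_isBallKernel_shrinkingKernels ν c x
  refine tendsto_integral_smul_of_tendsto_average_norm_sub c
    (hx.comp ((Besicovitch.tendsto_filterAt ν x).comp (tendsto_fst_shrinkingKernels ν c x)))
    (.of_forall fun _ => hρ.integrableOn_isCompact (isCompact_closedBall _ _))
    (tendsto_const_nhds.congr' <| hkernel.mono fun k hk => hk.integral_eq_one.symm)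
    (hkernel.mono fun k hk => hk.support_subset) ?_
  filter_upwards [hkernel] with k hk w
  exact (abs_of_nonneg (hk.nonneg w)).trans_le (hk.le_div w)

theorem ae_tendsto_integral_shrinkingKernels (μ : Measure X) [IsLocallyFiniteMeasure μ] :
    ∀ᵐ x ∂ν, ∀ c, Tendsto (fun k => ∫ w, k.2 w ∂μ) (shrinkingKernels ν c x)
      (𝓝 (μ.rnDeriv ν x).toReal) := by
  have : IsLocallyFiniteMeasure (μ.singularPart ν) :=
    Measure.isLocallyFiniteMeasure_of_le (Measure.singularPart_le μ ν)
  filter_upwards [ae_tendsto_integral_shrinkingKernels_of_mutuallySingular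
      (Measure.mutuallySingular_singularPart μ ν),
    ae_tendsto_integral_smul_shrinkingKernels (locallyIntegrable_toReal_rnDeriv μ ν)]
    with x hsing habs c
  rw [← zero_add (μ.rnDeriv ν x).toReal]
  refine ((hsing c).add (habs c)).congr' ?_
  filter_upwards [eventually_isBallKernel_shrinkingKernels ν c x] with k hk
  exact (hk.integral_eq_add μ).symm

end Kernels

theorem eventually_le_mul_sq_of_le_half_add {a : ℝ → ℝ} {C : ℝ} (hC : 0 ≤ C)
    (hlim : ∀ c > 0, ∀ᶠ r in 𝓝[>] (0 : ℝ), a r ≤ c)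
    (hhalf : ∀ᶠ r in 𝓝[>] (0 : ℝ), a r ≤ a (r / 2) + C * r ^ 2) :
    ∀ᶠ r in 𝓝[>] (0 : ℝ), a r ≤ 4 / 3 * C * r ^ 2 := by
  obtain ⟨R, hR, hstep⟩ := mem_nhdsGT_iff_exists_Ioo_subset.1 hhalf
  refine mem_nhdsGT_iff_exists_Ioo_subset.2 ⟨R, hR, fun r hr => ?_⟩
  -- `4 / 3 = ∑ 4⁻ⁿ`, so subtracting `4 / 3 * C * r ^ 2` makes the recursion monotone.
  have hmono (n : ℕ) :
      a r - 4 / 3 * C * r ^ 2 ≤ a (r / 2 ^ n) - 4 / 3 * C * (r / 2 ^ n) ^ 2 := by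
    induction n with
    | zero => simp
    | succ n ih =>
      have hmem : r / 2 ^ n ∈ Set.Ioo 0 R :=
        ⟨div_pos hr.1 (by positivity),
          (div_le_self hr.1.le (one_le_pow₀ one_le_two)).trans_lt hr.2⟩
      have hle : a (r / 2 ^ n) ≤ a (r / 2 ^ n / 2) + C * (r / 2 ^ n) ^ 2 := hstep hmem
      have hhalf_pow : r / 2 ^ (n + 1) = r / 2 ^ n / 2 := by rw [pow_succ, div_div]
      rw [hhalf_pow]
      linarith
  have hshrink : Tendsto (fun n : ℕ => r / 2 ^ n) atTop (𝓝[>] 0) :=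
    tendsto_nhdsWithin_iff.2
      ⟨tendsto_const_nhds.div_atTop (tendsto_pow_atTop_atTop_of_one_lt one_lt_two),
        .of_forall fun n => div_pos hr.1 (by positivity)⟩
  change a r ≤ 4 / 3 * C * r ^ 2
  refine le_of_forall_pos_le_add fun c hc => ?_
  obtain ⟨n, hn⟩ := (hshrink.eventually (hlim c hc)).exists
  have hsq : 0 ≤ 4 / 3 * C * (r / 2 ^ n) ^ 2 := by positivity
  linarith [hmono n]

section MollifiedExpansion

variable {E : Type*} [NormedAddCommGroup E] [NormedSpace ℝ E]

/-- The abstract properties of mollifications `G ε` of a function `g` at scale `ε` needed to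
transfer a second order expansion from `G` to `g`: `G ε` dominates `g`, it is bounded at `y` by the
constant term of any affine majorant of `g` on the ball of radius `ε` around `y`, and at scales
`ε = δ * r` it has a second order expansion at `0` with linear part `L ε` and second order part
`q`, uniformly on balls of radius `r`. -/
structure HasMollifiedExpansion (g q : E → ℝ) (G : ℝ → E → ℝ) (L : ℝ → E →L[ℝ] ℝ) : Prop where
  le : ∀ ε > 0, ∀ y, g y ≤ G ε y
  le_of_le_affine : ∀ ε > 0, ∀ (y : E) (c : ℝ) (ℓ : E →L[ℝ] ℝ),
    (∀ w, ‖w‖ ≤ ε → g (y + w) ≤ c + ℓ w) → G ε y ≤ c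
  expansion : ∀ δ ∈ Set.Ioc (0 : ℝ) 1, ∀ κ > 0, ∀ᶠ r in 𝓝[>] (0 : ℝ), ∀ y, ‖y‖ ≤ r →
    |G (δ * r) y - G (δ * r) 0 - L (δ * r) y - q y| ≤ κ * r ^ 2

namespace HasMollifiedExpansion

variable {g q : E → ℝ} {G : ℝ → E → ℝ} {L : ℝ → E →L[ℝ] ℝ} {K δ : ℝ}

theorem eventually_le_affine_add_sq (h : HasMollifiedExpansion g q G L) (hK : 0 ≤ K)
    (hq : ∀ y, |q y| ≤ K * ‖y‖ ^ 2) (hδ : δ ∈ Set.Ioc (0 : ℝ) 1) :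
    ∀ᶠ r in 𝓝[>] (0 : ℝ), ∀ y, ‖y‖ ≤ r →
      g y ≤ G (δ * r) 0 + L (δ * r) y + (K + 1) * r ^ 2 := by
  filter_upwards [h.expansion δ hδ 1 one_pos, self_mem_nhdsWithin] with r hr (hr0 : 0 < r) y hy
  have hqr : q y ≤ K * r ^ 2 := (le_of_abs_le (hq y)).trans (by gcongr)
  linarith [h.le (δ * r) (mul_pos hδ.1 hr0) y, le_of_abs_le (hr y hy)]

theorem eventually_apply_zero_le_half_add (h : HasMollifiedExpansion g q G L) (hK : 0 ≤ K)
    (hq : ∀ y, |q y| ≤ K * ‖y‖ ^ 2) :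
    ∀ᶠ r in 𝓝[>] (0 : ℝ), G r 0 ≤ G (r / 2) 0 + (K + 1) * r ^ 2 := by
  filter_upwards [h.eventually_le_affine_add_sq hK hq (δ := 1 / 2) (by norm_num),
    self_mem_nhdsWithin] with r hr hr0
  refine h.le_of_le_affine r hr0 0 _ (L (r / 2)) fun w hw => ?_
  have := hr w hw
  rw [one_div_mul_eq_div] at this
  rw [zero_add]
  linarith

theorem eventually_apply_zero_le (h : HasMollifiedExpansion g q G L) (hg : ContinuousAt g 0)
    (hg0 : g 0 = 0) (hK : 0 ≤ K) (hq : ∀ y, |q y| ≤ K * ‖y‖ ^ 2) :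
    ∀ᶠ r in 𝓝[>] (0 : ℝ), G r 0 ≤ 4 / 3 * (K + 1) * r ^ 2 := by
  refine eventually_le_mul_sq_of_le_half_add (by positivity) (fun c hc => ?_)
    (h.eventually_apply_zero_le_half_add hK hq)
  have hgc : ∀ᶠ w in 𝓝 (0 : E), g w < c := hg.eventually_lt_const (hg0 ▸ hc)
  obtain ⟨ρ, hρ, hball⟩ := Metric.eventually_nhds_iff_ball.1 hgc
  filter_upwards [Ioo_mem_nhdsGT hρ] with r hr
  refine h.le_of_le_affine r hr.1 0 c 0 fun w hw => ?_
  simpa using (hball w (by simpa using hw.trans_lt hr.2)).le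

theorem eventually_norm_linear_le (h : HasMollifiedExpansion g q G L) (hg : ContinuousAt g 0)
    (hg0 : g 0 = 0) (hnonneg : ∀ y, 0 ≤ g y) (hK : 0 ≤ K) (hq : ∀ y, |q y| ≤ K * ‖y‖ ^ 2) :
    ∀ᶠ r in 𝓝[>] (0 : ℝ), ‖L r‖ ≤ 3 * (K + 1) * r := by
  filter_upwards [h.eventually_le_affine_add_sq hK hq (δ := 1) (by norm_num),
    h.eventually_apply_zero_le hg hg0 hK hq, self_mem_nhdsWithin] with r haff hzero hr0
  rw [Set.mem_Ioi] at hr0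
  have hlower (y : E) (hy : ‖y‖ ≤ r) : -(3 * (K + 1) * r ^ 2) ≤ L r y := by
    have := haff y hy
    rw [one_mul] at this
    have : 0 ≤ (K + 1) * r ^ 2 := by positivity
    linarith [hnonneg y]
  have habs (y : E) (hy : y ∈ closedBall 0 r) : ‖L r y‖ ≤ 3 * (K + 1) * r ^ 2 := by
    rw [mem_closedBall_zero_iff] at hy
    have hneg := hlower (-y) (by rwa [norm_neg])
    rw [map_neg] at hneg
    exact abs_le.2 ⟨hlower y hy, by linarith⟩
  convert (L r).opNorm_bound_of_ball_bound hr0 _ habs using 1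
  field_simp

theorem eventually_le_mul_sq (h : HasMollifiedExpansion g q G L) (hg : ContinuousAt g 0)
    (hg0 : g 0 = 0) (hnonneg : ∀ y, 0 ≤ g y) (hK : 0 ≤ K) (hq : ∀ y, |q y| ≤ K * ‖y‖ ^ 2) :
    ∀ᶠ r in 𝓝[>] (0 : ℝ), ∀ y, ‖y‖ ≤ r → g y ≤ 6 * (K + 1) * r ^ 2 := by
  filter_upwards [h.eventually_le_affine_add_sq hK hq (δ := 1) (by norm_num),
    h.eventually_apply_zero_le hg hg0 hK hq, h.eventually_norm_linear_le hg hg0 hnonneg hK hq,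
    self_mem_nhdsWithin] with r haff hzero hlin hr0 y hy
  rw [Set.mem_Ioi] at hr0
  have hLy : L r y ≤ 3 * (K + 1) * r * r := (L r).le_of_opNorm_le_of_le hlin hy |> le_of_abs_le
  have := haff y hy
  rw [one_mul] at this
  have : 0 ≤ (K + 1) * r ^ 2 := by positivity
  linarith

-- Convexity on the segment from `y` to `y + δ⁻¹ • w` bounds `g (y + w) - g y` by `δ` times the
-- value of `g` at distance at most `2 * r` from the origin.
theorem eventually_apply_le_add (h : HasMollifiedExpansion g q G L) (hconv : ConvexOn ℝ Set.univ g)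
    (hg : ContinuousAt g 0) (hg0 : g 0 = 0) (hnonneg : ∀ y, 0 ≤ g y) (hK : 0 ≤ K)
    (hq : ∀ y, |q y| ≤ K * ‖y‖ ^ 2) (hδ : δ ∈ Set.Ioc (0 : ℝ) 1) :
    ∀ᶠ r in 𝓝[>] (0 : ℝ), ∀ y, ‖y‖ ≤ r → G (δ * r) y ≤ g y + 24 * (K + 1) * δ * r ^ 2 := by
  filter_upwards [eventually_nhdsGT_zero_mul_left two_pos
      (h.eventually_le_mul_sq hg hg0 hnonneg hK hq),
    self_mem_nhdsWithin] with r hbound (hr0 : 0 < r) y hy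
  refine h.le_of_le_affine _ (mul_pos hδ.1 hr0) y _ 0 fun w hw => ?_
  have hnorm : ‖y + δ⁻¹ • w‖ ≤ 2 * r := by
    have : ‖δ⁻¹ • w‖ ≤ r := by
      rwa [norm_smul, Real.norm_of_nonneg (inv_nonneg.2 hδ.1.le), inv_mul_le_iff₀ hδ.1]
    linarith [norm_add_le y (δ⁻¹ • w)]
  have hseg : (1 - δ) • y + δ • (y + δ⁻¹ • w) = y + w := by
    rw [smul_add, smul_inv_smul₀ hδ.1.ne']
    module
  calc g (y + w) ≤ (1 - δ) * g y + δ * g (y + δ⁻¹ • w) :=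
        hseg ▸ hconv.2 (Set.mem_univ y) (Set.mem_univ _) (sub_nonneg.2 hδ.2) hδ.1.le (by ring)
    _ ≤ 1 * g y + δ * (6 * (K + 1) * (2 * r) ^ 2) := by
        gcongr
        · exact hnonneg y
        · linarith [hδ.1]
        · exact hδ.1.le
        · exact hbound _ hnorm
    _ = g y + 24 * (K + 1) * δ * r ^ 2 + (0 : E →L[ℝ] ℝ) w := by
        rw [zero_apply]
        ring

theorem eventually_abs_sub_le (h : HasMollifiedExpansion g q G L) (hconv : ConvexOn ℝ Set.univ g)
    (hg : ContinuousAt g 0) (hg0 : g 0 = 0) (hnonneg : ∀ y, 0 ≤ g y) (hK : 0 ≤ K)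
    (hq : ∀ y, |q y| ≤ K * ‖y‖ ^ 2) (hδ : δ ∈ Set.Ioc (0 : ℝ) 1) {κ : ℝ} (hκ : 0 < κ) :
    ∀ᶠ r in 𝓝[>] (0 : ℝ), ∀ y, ‖y‖ ≤ r →
      |g y - q y| ≤ (κ + 30 * (K + 1) * δ) * r ^ 2 := by
  filter_upwards [h.expansion δ hδ κ hκ,
    eventually_nhdsGT_zero_mul_left hδ.1 (h.eventually_apply_zero_le hg hg0 hK hq),
    eventually_nhdsGT_zero_mul_left hδ.1 (h.eventually_norm_linear_le hg hg0 hnonneg hK hq),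
    h.eventually_apply_le_add hconv hg hg0 hnonneg hK hq hδ, self_mem_nhdsWithin]
    with r hexp hzero hlin hupper (hr0 : 0 < r) y hy
  have hε : 0 < δ * r := mul_pos hδ.1 hr0
  have hLy := abs_le.1 ((L (δ * r)).le_of_opNorm_le_of_le hlin hy)
  have hzero_nonneg : 0 ≤ G (δ * r) 0 := hg0 ▸ h.le _ hε 0
  have hδsq : (K + 1) * (δ * r) ^ 2 ≤ (K + 1) * δ * r ^ 2 := by
    have : δ ^ 2 ≤ δ := pow_le_of_le_one hδ.1.le hδ.2 two_ne_zero
    rw [mul_pow, ← mul_assoc]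
    gcongr
  have : 0 ≤ (K + 1) * δ * r ^ 2 := by have := hδ.1; positivity
  have hexp := abs_le.1 (hexp y hy)
  rw [abs_le]
  constructor <;> linarith [h.le _ hε y, hupper y hy]

theorem isLittleO (h : HasMollifiedExpansion g q G L) (hconv : ConvexOn ℝ Set.univ g)
    (hg : ContinuousAt g 0) (hg0 : g 0 = 0) (hnonneg : ∀ y, 0 ≤ g y) (hK : 0 ≤ K)
    (hq : ∀ y, |q y| ≤ K * ‖y‖ ^ 2) :
    (fun y => g y - q y) =o[𝓝 0] fun y => ‖y‖ ^ 2 := by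
  have hq0 : q 0 = 0 := abs_nonpos_iff.1 (by simpa using hq 0)
  suffices (fun y => g y - q y) =o[𝓝[≠] 0] fun y => ‖y‖ ^ 2 by
    rw [← pure_sup_nhdsNE, Asymptotics.isLittleO_sup]
    exact ⟨Asymptotics.isLittleO_pure.2 (by rw [hg0, hq0, sub_zero]), this⟩
  refine Asymptotics.isLittleO_iff.2 fun κ hκ => ?_
  obtain ⟨δ, hδ, hδκ⟩ : ∃ δ ∈ Set.Ioc (0 : ℝ) 1, 30 * (K + 1) * δ ≤ κ / 2 := by
    refine ⟨min 1 (κ / (60 * (K + 1))), ⟨by positivity, min_le_left _ _⟩, ?_⟩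
    calc 30 * (K + 1) * min 1 (κ / (60 * (K + 1)))
        ≤ 30 * (K + 1) * (κ / (60 * (K + 1))) := by gcongr; exact min_le_right _ _
      _ = κ / 2 := by field_simp; norm_num
  filter_upwards [tendsto_norm_nhdsNE_zero.eventually
    (h.eventually_abs_sub_le hconv hg hg0 hnonneg hK hq hδ (half_pos hκ))] with y hy
  rw [Real.norm_eq_abs, norm_pow, norm_norm]
  exact (hy y le_rfl).trans (by gcongr; linarith)

end HasMollifiedExpansion

end MollifiedExpansion

section Mollification

open Module (finrank)
open scoped Convolution

variable {E : Type*} [NormedAddCommGroup E] [NormedSpace ℝ E] [FiniteDimensional ℝ E]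
  [MeasurableSpace E] [BorelSpace E] {ν : Measure E} [ν.IsAddHaarMeasure]

/-- A smooth even probability density supported in the closed ball of radius `ε` around `0`. The
factor `2 ^ finrank ℝ E` is what a bump function equal to its maximum on the ball of radius `ε / 2`
achieves. -/
structure IsMollifier (ν : Measure E) (ε : ℝ) (η : E → ℝ) : Prop
    extends IsBallKernel ν (2 ^ finrank ℝ E) 0 ε η where
  contDiff : ContDiff ℝ (⊤ : ℕ∞) η
  even : η.Even

theorem exists_isMollifier (ν : Measure E) [ν.IsAddHaarMeasure] {ε : ℝ} (hε : 0 < ε) :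
    ∃ η, IsMollifier ν ε η := by
  let bump : ContDiffBump (0 : E) := ⟨ε / 2, ε, half_pos hε, half_lt_self hε⟩
  have hratio : bump.rOut ≤ 2 * bump.rIn := (mul_div_cancel₀ ε two_ne_zero).ge
  exact ⟨bump.normed ν,
    { continuous := bump.continuous_normed
      nonneg := bump.nonneg_normed
      integral_eq_one := bump.integral_normed
      support_subset := bump.support_normed_eq.trans_subset ball_subset_closedBall
      le_div := bump.normed_le_div_measure_closedBall_rOut ν 2 hratio
      contDiff := bump.contDiff_normed
      even := bump.normed_neg }⟩

namespace IsBallKernel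

variable {C ε : ℝ} {η f : E → ℝ} {z : E}

theorem comp_const_sub (h : IsBallKernel ν C 0 ε η) (hε : 0 < ε) {s : ℝ} (hz : ‖z‖ + ε ≤ s)
    (x : E) : IsBallKernel ν (C * (s / ε) ^ finrank ℝ E) x s (fun w => η (x + z - w)) where
  continuous := h.continuous.comp (by fun_prop)
  nonneg _ := h.nonneg _
  integral_eq_one := (integral_sub_left_eq_self η ν (x + z)).trans h.integral_eq_one
  support_subset w hw := by
    have hball : ‖x + z - w‖ ≤ ε := mem_closedBall_zero_iff.1 (h.support_subset hw)
    rw [mem_closedBall, dist_eq_norm, show w - x = z - (x + z - w) by abel]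
    linarith [norm_sub_le z (x + z - w)]
  le_div w := by
    have hs : 0 ≤ s := by linarith [norm_nonneg z]
    convert! h.le_div (x + z - w) using 1
    rw [Measure.addHaar_real_closedBall ν _ hε.le, Measure.addHaar_real_closedBall ν _ hs,
      div_pow]
    have hs' : s ≠ 0 := by linarith [norm_nonneg z]
    field_simp

theorem convolution_eq_integral_midpoint (h : IsBallKernel ν C 0 ε η) (heven : η.Even)
    (hf : Continuous f) (z : E) :
    (f ⋆[.mul ℝ ℝ, ν] η) z = ∫ t, η t * ((f (z - t) + f (z + t)) / 2) ∂ν := by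
  have hint (g : E → ℝ) (hg : Continuous g) : Integrable (fun t => η t * g t) ν :=
    (h.continuous.mul hg).integrable_of_hasCompactSupport h.hasCompactSupport.mul_right
  have hminus : (f ⋆[.mul ℝ ℝ, ν] η) z = ∫ t, η t * f (z - t) ∂ν := by
    simp only [convolution_mul_swap, mul_comm]
  have hplus : ∫ t, η t * f (z - t) ∂ν = ∫ t, η t * f (z + t) ∂ν := by
    rw [← integral_neg_eq_self]
    simp only [heven _, sub_neg_eq_add]
  calc (f ⋆[.mul ℝ ℝ, ν] η) z
      = (∫ t, η t * f (z - t) ∂ν + ∫ t, η t * f (z + t) ∂ν) / 2 := by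
        rw [← hplus, ← hminus, add_self_div_two]
    _ = ∫ t, η t * ((f (z - t) + f (z + t)) / 2) ∂ν := by
        rw [← integral_add (hint _ (by fun_prop)) (hint _ (by fun_prop)), ← integral_div]
        simp only [← mul_add, mul_div_assoc]

theorem convolution_le_of_le_affine (h : IsBallKernel ν C 0 ε η) (heven : η.Even)
    (hf : Continuous f) {c : ℝ} {ℓ : E →L[ℝ] ℝ} (hle : ∀ w, ‖w‖ ≤ ε → f (z + w) ≤ c + ℓ w) :
    (f ⋆[.mul ℝ ℝ, ν] η) z ≤ c := by
  have hcont : Continuous fun t => η t * ((f (z - t) + f (z + t)) / 2) :=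
    h.continuous.mul (by fun_prop)
  calc (f ⋆[.mul ℝ ℝ, ν] η) z = ∫ t, η t * ((f (z - t) + f (z + t)) / 2) ∂ν :=
        h.convolution_eq_integral_midpoint heven hf z
    _ ≤ ∫ t, η t * c ∂ν := by
        refine integral_mono
          (hcont.integrable_of_hasCompactSupport h.hasCompactSupport.mul_right)
          ((h.integrable ν).mul_const c) fun t => ?_
        by_cases ht : η t = 0
        · simp [ht]
        have ht : ‖t‖ ≤ ε := mem_closedBall_zero_iff.1 (h.support_subset ht)
        have hminus := hle (-t) (by rwa [norm_neg])
        rw [← sub_eq_add_neg, map_neg] at hminus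
        exact mul_le_mul_of_nonneg_left (by linarith [hle t ht]) (h.nonneg t)
    _ = c := by rw [integral_mul_const, h.integral_eq_one, one_mul]

theorem le_convolution_of_convexOn (h : IsBallKernel ν C 0 ε η) (heven : η.Even)
    (hf : ConvexOn ℝ Set.univ f) (z : E) : f z ≤ (f ⋆[.mul ℝ ℝ, ν] η) z := by
  have hfcont : Continuous f := hf.locallyLipschitz.continuous
  have hcont : Continuous fun t => η t * ((f (z - t) + f (z + t)) / 2) :=
    h.continuous.mul (by fun_prop)
  calc f z = ∫ t, η t * f z ∂ν := by rw [integral_mul_const, h.integral_eq_one, one_mul]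
    _ ≤ ∫ t, η t * ((f (z - t) + f (z + t)) / 2) ∂ν := by
        refine integral_mono ((h.integrable ν).mul_const _)
          (hcont.integrable_of_hasCompactSupport h.hasCompactSupport.mul_right) fun t => ?_
        have hmid := hf.2 (Set.mem_univ (z - t)) (Set.mem_univ (z + t)) one_half_pos.le
          one_half_pos.le (add_halves 1)
        rw [show (1 / 2 : ℝ) • (z - t) + (1 / 2 : ℝ) • (z + t) = z by module, smul_eq_mul,
          smul_eq_mul] at hmid
        exact mul_le_mul_of_nonneg_left (by linarith) (h.nonneg t)
    _ = (f ⋆[.mul ℝ ℝ, ν] η) z := (h.convolution_eq_integral_midpoint heven hfcont z).symm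

end IsBallKernel

theorem fderiv_convolution_apply {f η : E → ℝ} (hf : LocallyIntegrable f ν)
    (hη : ContDiff ℝ 1 η) (hsupp : HasCompactSupport η) (z v : E) :
    fderiv ℝ (f ⋆[.mul ℝ ℝ, ν] η) z v = (f ⋆[.mul ℝ ℝ, ν] fun w => fderiv ℝ η w v) z := by
  rw [(hsupp.hasFDerivAt_convolution_right _ hf hη z).fderiv,
    convolution_precompR_apply _ hf (hsupp.fderiv ℝ) (hη.continuous_fderiv one_ne_zero)]

end Mollification

section SecondPartial

open scoped Convolution

theorem fderiv_comp_const_sub {E F : Type*} [NormedAddCommGroup E] [NormedSpace ℝ E]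
    [NormedAddCommGroup F] [NormedSpace ℝ F] (f : E → F) (z w : E) :
    fderiv ℝ (fun u => f (z - u)) w = -fderiv ℝ f (z - w) := by
  have hcomp : (fun u => f (z - u)) = (fun u => f (z + u)) ∘ ContinuousLinearEquiv.neg ℝ := by
    ext u
    simp [sub_eq_add_neg]
  rw [hcomp, ContinuousLinearEquiv.comp_right_fderiv, fderiv_comp_add_left]
  ext v
  simp [sub_eq_add_neg]

variable {d : ℕ}

theorem secondPartial_comp_const_sub (φ : EuclideanSpace ℝ (Fin d) → ℝ) (i j : Fin d)
    (z w : EuclideanSpace ℝ (Fin d)) :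
    secondPartial d (fun u => φ (z - u)) i j w = secondPartial d φ i j (z - w) := by
  simp only [secondPartial, fderiv_comp_const_sub, neg_apply, fderiv_fun_neg,
    fderiv_comp_const_sub (fun u => fderiv ℝ φ u (EuclideanSpace.single j 1)), neg_neg]

theorem secondPartial_convolution {f η : EuclideanSpace ℝ (Fin d) → ℝ}
    (hf : LocallyIntegrable f) (hη : ContDiff ℝ 2 η) (hsupp : HasCompactSupport η)
    (i j : Fin d) (z : EuclideanSpace ℝ (Fin d)) :
    secondPartial d (f ⋆[.mul ℝ ℝ, volume] η) i j z = ∫ w, f w * secondPartial d η i j (z - w) := by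
  have hfderiv : ContDiff ℝ 1 fun w => fderiv ℝ η w (EuclideanSpace.single j 1) :=
    (hη.fderiv_right one_add_one_eq_two.le).clm_apply contDiff_const
  simp only [secondPartial, fderiv_convolution_apply hf (hη.of_le one_le_two) hsupp]
  exact fderiv_convolution_apply hf hfderiv (hsupp.fderiv_apply ℝ _) z _

theorem IsSecondDerivMeasures.secondPartial_convolution_eq
    {f η : EuclideanSpace ℝ (Fin d) → ℝ}
    {μp μn : Fin d → Fin d → Measure (EuclideanSpace ℝ (Fin d))}
    (hμ : IsSecondDerivMeasures d f μp μn)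
    (hf : LocallyIntegrable f) (hη : ContDiff ℝ (⊤ : ℕ∞) η) (hsupp : HasCompactSupport η)
    (i j : Fin d) (z : EuclideanSpace ℝ (Fin d)) :
    secondPartial d (f ⋆[.mul ℝ ℝ, volume] η) i j z =
      ∫ w, η (z - w) ∂(μp i j) - ∫ w, η (z - w) ∂(μn i j) := by
  rw [secondPartial_convolution hf (contDiff_infty.1 hη 2) hsupp]
  simp only [← secondPartial_comp_const_sub]
  exact (hμ.2.2 i j _ (hη.comp (contDiff_const.sub contDiff_id))
    (hsupp.comp_homeomorph (Homeomorph.subLeft z))).symm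

end SecondPartial

section Taylor

theorem abs_sub_le_of_abs_deriv_deriv_le {φ φ' φ'' : ℝ → ℝ} {M : ℝ}
    (hφ : ∀ s, HasDerivAt φ (φ' s) s) (hφ' : ∀ s, HasDerivAt φ' (φ'' s) s) (h0 : φ' 0 = 0)
    (hM : ∀ s ∈ Set.Icc (0 : ℝ) 1, |φ'' s| ≤ M) : |φ 1 - φ 0| ≤ M := by
  refine norm_image_sub_le_of_norm_deriv_le_segment_01' (fun s _ => (hφ s).hasDerivWithinAt)
    fun s hs => ?_
  have hderiv : ‖φ' s - φ' 0‖ ≤ M * (s - 0) :=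
    norm_image_sub_le_of_norm_deriv_le_segment' (fun s _ => (hφ' s).hasDerivWithinAt)
      (fun s hs => hM s ⟨hs.1, hs.2.le⟩) s ⟨hs.1, hs.2.le⟩
  rw [h0, sub_zero, sub_zero] at hderiv
  exact hderiv.trans (mul_le_of_le_one_right ((abs_nonneg _).trans (hM 0 (by simp))) hs.2.le)

variable {d : ℕ} {F : EuclideanSpace ℝ (Fin d) → ℝ} {M : Matrix (Fin d) (Fin d) ℝ}
  {x y : EuclideanSpace ℝ (Fin d)}

theorem quadForm_sub (M N : Matrix (Fin d) (Fin d) ℝ) (y : EuclideanSpace ℝ (Fin d)) :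
    quadForm d (M - N) y = quadForm d M y - quadForm d N y := by
  simp only [quadForm, Matrix.sub_apply, sub_mul, Finset.sum_sub_distrib]

theorem abs_quadForm_le (M : Matrix (Fin d) (Fin d) ℝ) (y : EuclideanSpace ℝ (Fin d)) :
    |quadForm d M y| ≤ (∑ i, ∑ j, |M i j|) * ‖y‖ ^ 2 := by
  simp only [Finset.sum_mul]
  refine (Finset.abs_sum_le_sum_abs _ _).trans (Finset.sum_le_sum fun i _ =>
    (Finset.abs_sum_le_sum_abs _ _).trans (Finset.sum_le_sum fun j _ => ?_))
  have hi : |y i| ≤ ‖y‖ := PiLp.norm_apply_le y i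
  have hj : |y j| ≤ ‖y‖ := PiLp.norm_apply_le y j
  rw [abs_mul, abs_mul, pow_two, ← mul_assoc]
  gcongr

theorem continuous_quadForm (M : Matrix (Fin d) (Fin d) ℝ) : Continuous (quadForm d M) := by
  unfold quadForm
  fun_prop

theorem clm_apply_eq_sum_single (L : EuclideanSpace ℝ (Fin d) →L[ℝ] ℝ)
    (y : EuclideanSpace ℝ (Fin d)) : L y = ∑ i, y i * L (EuclideanSpace.single i 1) := by
  conv_lhs => rw [← (EuclideanSpace.basisFun (Fin d) ℝ).sum_repr y]
  simp [map_sum]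

/-- The Hessian matrix of `F`, with the entries indexed as in `secondPartial`. -/
noncomputable def hessianMatrix (d : ℕ) (F : EuclideanSpace ℝ (Fin d) → ℝ)
    (x : EuclideanSpace ℝ (Fin d)) : Matrix (Fin d) (Fin d) ℝ :=
  Matrix.of fun i j => secondPartial d F i j x

theorem fderiv_fderiv_apply_eq_quadForm (hF : ContDiff ℝ 2 F) (x y : EuclideanSpace ℝ (Fin d)) :
    fderiv ℝ (fun z => fderiv ℝ F z y) x y = quadForm d (hessianMatrix d F x) y := by
  have hdiff (v : EuclideanSpace ℝ (Fin d)) : DifferentiableAt ℝ (fun z => fderiv ℝ F z v) x :=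
    (((hF.fderiv_right one_add_one_eq_two.le).clm_apply contDiff_const).differentiable
      one_ne_zero).differentiableAt
  simp only [clm_apply_eq_sum_single _ y]
  rw [fderiv_fun_sum fun j _ => (hdiff _).const_mul (y j)]
  simp only [fderiv_const_mul (hdiff _), sum_apply, smul_apply, smul_eq_mul, Finset.mul_sum,
    quadForm, hessianMatrix, secondPartial, Matrix.of_apply]
  exact Finset.sum_congr rfl fun i _ => Finset.sum_congr rfl fun j _ => by ring

theorem abs_taylor_sub_le (hF : ContDiff ℝ 2 F) {κ : ℝ}
    (hκ : ∀ z, ‖z‖ ≤ ‖y‖ → ∑ i, ∑ j, |(hessianMatrix d F (x + z) - M) i j| ≤ κ) :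
    |F (x + y) - F x - fderiv ℝ F x y - 1 / 2 * quadForm d M y| ≤ κ * ‖y‖ ^ 2 := by
  have hline (s : ℝ) : HasDerivAt (fun s : ℝ => x + s • y) y s := by
    simpa using ((hasDerivAt_id s).smul_const y).const_add x
  have hfderiv : Differentiable ℝ fun z => fderiv ℝ F z y :=
    ((hF.fderiv_right one_add_one_eq_two.le).clm_apply contDiff_const).differentiable one_ne_zero
  let φ (s : ℝ) := F (x + s • y) - s * fderiv ℝ F x y - 1 / 2 * s ^ 2 * quadForm d M y
  let φ' (s : ℝ) := fderiv ℝ F (x + s • y) y - fderiv ℝ F x y - s * quadForm d M y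
  let φ'' (s : ℝ) := quadForm d (hessianMatrix d F (x + s • y)) y - quadForm d M y
  have hφ (s : ℝ) : HasDerivAt φ (φ' s) s := by
    refine (((hF.differentiable two_ne_zero _).hasFDerivAt.comp_hasDerivAt s (hline s)).sub
      (hasDerivAt_mul_const _)).sub ?_
    convert! (((hasDerivAt_id s).pow 2).const_mul (1 / 2)).mul_const (quadForm d M y) using 1
    simp
  have hφ' (s : ℝ) : HasDerivAt φ' (φ'' s) s := by
    have := (hfderiv (x + s • y)).hasFDerivAt.comp_hasDerivAt s (hline s)
    rw [fderiv_fderiv_apply_eq_quadForm hF] at this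
    exact (this.sub_const _).sub (hasDerivAt_mul_const _)
  have hbound (s : ℝ) (hs : s ∈ Set.Icc (0 : ℝ) 1) : |φ'' s| ≤ κ * ‖y‖ ^ 2 := by
    have hsy : ‖s • y‖ ≤ ‖y‖ := by
      rw [norm_smul, Real.norm_of_nonneg hs.1]
      exact mul_le_of_le_one_left (norm_nonneg y) hs.2
    simp only [φ'', ← quadForm_sub]
    exact (abs_quadForm_le _ y).trans (by gcongr; exact hκ _ hsy)
  convert abs_sub_le_of_abs_deriv_deriv_le hφ hφ' (by simp [φ']) hbound using 2
  simp only [φ, one_smul, zero_smul, add_zero]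
  ring

end Taylor

section Alexandrov

open scoped Convolution

theorem convexOn_comp_const_add_sub_inner {E : Type*} [NormedAddCommGroup E]
    [InnerProductSpace ℝ E] {f : E → ℝ} (hf : ConvexOn ℝ Set.univ f) (x v : E) :
    ConvexOn ℝ Set.univ fun y => f (x + y) - f x - ⟪v, y⟫ :=
  ((hf.translate_right x).sub (concaveOn_const (f x) convex_univ)).sub
    ((innerSL ℝ v).toLinearMap.concaveOn convex_univ)

variable {d : ℕ} {f : EuclideanSpace ℝ (Fin d) → ℝ}
  {μp μn : Fin d → Fin d → Measure (EuclideanSpace ℝ (Fin d))}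

theorem IsSecondDerivMeasures.ae_tendsto_sum_abs_integral_sub
    (hμ : IsSecondDerivMeasures d f μp μn) :
    ∀ᵐ x, ∀ c, Tendsto
      (fun k => ∑ i, ∑ j,
        |∫ w, k.2 w ∂(μp i j) - ∫ w, k.2 w ∂(μn i j) - densityMatrix d μp μn x i j|)
      (shrinkingKernels volume c x) (𝓝 0) := by
  have hpos : ∀ᵐ x, ∀ i j c, Tendsto (fun k => ∫ w, k.2 w ∂(μp i j))
      (shrinkingKernels volume c x) (𝓝 ((μp i j).rnDeriv volume x).toReal) :=
    ae_all_iff.2 fun i => ae_all_iff.2 fun j =>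
      have := hμ.1 i j
      ae_tendsto_integral_shrinkingKernels (μp i j)
  have hneg : ∀ᵐ x, ∀ i j c, Tendsto (fun k => ∫ w, k.2 w ∂(μn i j))
      (shrinkingKernels volume c x) (𝓝 ((μn i j).rnDeriv volume x).toReal) :=
    ae_all_iff.2 fun i => ae_all_iff.2 fun j =>
      have := hμ.2.1 i j
      ae_tendsto_integral_shrinkingKernels (μn i j)
  filter_upwards [hpos, hneg] with x hpos hneg c
  have hentry (i j : Fin d) : Tendsto
      (fun k => |∫ w, k.2 w ∂(μp i j) - ∫ w, k.2 w ∂(μn i j) - densityMatrix d μp μn x i j|)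
      (shrinkingKernels volume c x) (𝓝 0) := by
    have hdiff := (hpos i j c).sub (hneg i j c)
    simpa [densityMatrix] using (hdiff.sub_const (densityMatrix d μp μn x i j)).abs
  simpa using tendsto_finsetSum _ fun i _ => tendsto_finsetSum _ fun j _ => hentry i j

theorem IsSecondDerivMeasures.ae_eventually_hessianMatrix_convolution_sub_le
    (hμ : IsSecondDerivMeasures d f μp μn) (hf : LocallyIntegrable f) :
    ∀ᵐ x, ∀ δ ∈ Set.Ioc (0 : ℝ) 1, ∀ κ > 0, ∀ᶠ r in 𝓝[>] (0 : ℝ), ∀ η,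
      IsMollifier volume (δ * r) η → ∀ z, ‖z‖ ≤ r →
        ∑ i, ∑ j, |(hessianMatrix d (f ⋆[.mul ℝ ℝ, volume] η) (x + z) -
          densityMatrix d μp μn x) i j| ≤ κ := by
  filter_upwards [hμ.ae_tendsto_sum_abs_integral_sub] with x hx δ hδ κ hκ
  let n := Module.finrank ℝ (EuclideanSpace ℝ (Fin d))
  have hkernels : ∀ᶠ s in 𝓝[>] (0 : ℝ), ∀ η,
      IsBallKernel volume (2 ^ n * (2 / δ) ^ n) x s η → ∑ i, ∑ j,
        |∫ w, η w ∂(μp i j) - ∫ w, η w ∂(μn i j) - densityMatrix d μp μn x i j| ≤ κ :=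
    eventually_shrinkingKernels.1 ((hx _).eventually_le_const hκ)
  filter_upwards [eventually_nhdsGT_zero_mul_left two_pos hkernels, self_mem_nhdsWithin]
    with r hr (hr0 : 0 < r) η hη z hz
  have hradius : ‖z‖ + δ * r ≤ 2 * r := by
    linarith [mul_le_of_le_one_left hr0.le hδ.2]
  have hkernel := hη.toIsBallKernel.comp_const_sub (mul_pos hδ.1 hr0) hradius x
  rw [mul_div_mul_right _ _ hr0.ne'] at hkernel
  simpa only [Matrix.sub_apply, hessianMatrix, Matrix.of_apply,
    hμ.secondPartial_convolution_eq hf hη.contDiff hη.hasCompactSupport] using hr _ hkernel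

theorem hasMollifiedExpansion_convolution (hf : ConvexOn ℝ Set.univ f)
    {x : EuclideanSpace ℝ (Fin d)} {M : Matrix (Fin d) (Fin d) ℝ}
    {η : ℝ → EuclideanSpace ℝ (Fin d) → ℝ} (hη : ∀ ε > 0, IsMollifier volume ε (η ε))
    (hM : ∀ δ ∈ Set.Ioc (0 : ℝ) 1, ∀ κ > 0, ∀ᶠ r in 𝓝[>] (0 : ℝ), ∀ z, ‖z‖ ≤ r →
      ∑ i, ∑ j, |(hessianMatrix d (f ⋆[.mul ℝ ℝ, volume] η (δ * r)) (x + z) - M) i j| ≤ κ)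
    (v : EuclideanSpace ℝ (Fin d)) :
    HasMollifiedExpansion (fun y => f (x + y) - f x - ⟪v, y⟫) (fun y => 1 / 2 * quadForm d M y)
      (fun ε y => (f ⋆[.mul ℝ ℝ, volume] η ε) (x + y) - f x - ⟪v, y⟫)
      (fun ε => fderiv ℝ (f ⋆[.mul ℝ ℝ, volume] η ε) x - innerSL ℝ v) := by
  have hcont : Continuous f := hf.locallyLipschitz.continuous
  refine ⟨fun ε hε y => ?_, fun ε hε y c ℓ hle => ?_, fun δ hδ κ hκ => ?_⟩
  · linarith [(hη ε hε).le_convolution_of_convexOn (hη ε hε).even hf (x + y)]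
  · suffices (f ⋆[.mul ℝ ℝ, volume] η ε) (x + y) ≤ c + f x + ⟪v, y⟫ by linarith
    refine (hη ε hε).convolution_le_of_le_affine (hη ε hε).even hcont (ℓ := ℓ + innerSL ℝ v)
      fun w hw => ?_
    have hw := hle w hw
    rw [inner_add_right, ← add_assoc] at hw
    rw [add_apply, innerSL_apply_apply]
    linarith
  · filter_upwards [hM δ hδ κ hκ, self_mem_nhdsWithin] with r hr hr0 y hy
    have hη := hη (δ * r) (mul_pos hδ.1 hr0)
    have hsmooth : ContDiff ℝ 2 (f ⋆[.mul ℝ ℝ, volume] η (δ * r)) :=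
      hη.hasCompactSupport.contDiff_convolution_right _ hcont.locallyIntegrable
        (contDiff_infty.1 hη.contDiff 2)
    calc _ = |(f ⋆[.mul ℝ ℝ, volume] η (δ * r)) (x + y) - (f ⋆[.mul ℝ ℝ, volume] η (δ * r)) x -
          fderiv ℝ (f ⋆[.mul ℝ ℝ, volume] η (δ * r)) x y - 1 / 2 * quadForm d M y| := by
          rw [sub_apply, innerSL_apply_apply, add_zero, inner_zero_right]
          ring_nf
      _ ≤ κ * ‖y‖ ^ 2 := abs_taylor_sub_le hsmooth fun z hz => hr z (hz.trans hy)
      _ ≤ κ * r ^ 2 := by gcongr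

theorem IsSecondDerivMeasures.ae_isLittleO (hμ : IsSecondDerivMeasures d f μp μn)
    (hf : ConvexOn ℝ Set.univ f) :
    ∀ᵐ x, ∀ v, (∀ y, f x + ⟪v, y - x⟫ ≤ f y) →
      (fun y => f (x + y) - f x - ⟪v, y⟫ - 1 / 2 * quadForm d (densityMatrix d μp μn x) y)
        =o[𝓝 0] fun y => ‖y‖ ^ 2 := by
  have hcont : Continuous f := hf.locallyLipschitz.continuous
  choose! η hη using fun ε (hε : 0 < ε) =>
    exists_isMollifier (volume : Measure (EuclideanSpace ℝ (Fin d))) hε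
  filter_upwards [hμ.ae_eventually_hessianMatrix_convolution_sub_le hcont.locallyIntegrable]
    with x hx v hv
  have hexp := hasMollifiedExpansion_convolution hf hη (M := densityMatrix d μp μn x)
    (fun δ hδ κ hκ => by
      filter_upwards [hx δ hδ κ hκ, self_mem_nhdsWithin] with r hr hr0
      exact hr _ (hη _ (mul_pos hδ.1 hr0))) v
  refine hexp.isLittleO (K := ∑ i, ∑ j, |densityMatrix d μp μn x i j|)
    (convexOn_comp_const_add_sub_inner hf x v) (by fun_prop) (by simp) (fun y => ?_)
    (by positivity) (fun y => ?_)
  · have := hv (x + y)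
    rw [add_sub_cancel_left] at this
    linarith
  · rw [abs_mul, abs_of_pos one_half_pos]
    linarith [abs_quadForm_le (densityMatrix d μp μn x) y,
      abs_nonneg (quadForm d (densityMatrix d μp μn x) y)]

end Alexandrov

section HeatKernel

variable {d : ℕ} {s t : ℝ} {u : EuclideanSpace ℝ (Fin d) → ℝ}

theorem heatKernel_nonneg (ht : 0 ≤ t) (y : EuclideanSpace ℝ (Fin d)) : 0 ≤ heatKernel d t y := by
  unfold heatKernel
  positivity

theorem continuous_heatKernel (d : ℕ) (t : ℝ) : Continuous (heatKernel d t) := by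
  unfold heatKernel
  fun_prop

theorem integral_heatKernel (d : ℕ) (ht : 0 < t) : ∫ y, heatKernel d t y = 1 := by
  have hgauss := GaussianFourier.integral_rexp_neg_mul_sq_norm
    (V := EuclideanSpace ℝ (Fin d)) (b := 1 / (2 * t)) (by positivity)
  have hexp (y : EuclideanSpace ℝ (Fin d)) : -‖y‖ ^ 2 / (2 * t) = -(1 / (2 * t)) * ‖y‖ ^ 2 := by
    ring
  simp only [heatKernel, hexp, integral_const_mul, hgauss, finrank_euclideanSpace_fin]
  rw [div_div_eq_mul_div, div_one, show Real.pi * (2 * t) = 2 * Real.pi * t by ring,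
    ← Real.rpow_add (by positivity), neg_div, neg_add_cancel, Real.rpow_zero]

theorem integrable_heatKernel (d : ℕ) (ht : 0 < t) : Integrable (heatKernel d t) :=
  integrable_of_integral_eq_one (integral_heatKernel d ht)

theorem heatKernel_eq_mul_heatKernel (hs : 0 < s) (ht : 0 < t) (y : EuclideanSpace ℝ (Fin d)) :
    heatKernel d t y = (s / t) ^ ((d : ℝ) / 2) *
      Real.exp (-((1 / (2 * t) - 1 / (2 * s)) * ‖y‖ ^ 2)) * heatKernel d s y := by
  have hfactor : (2 * Real.pi * t) ^ (-(d : ℝ) / 2) =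
      (s / t) ^ ((d : ℝ) / 2) * (2 * Real.pi * s) ^ (-(d : ℝ) / 2) := by
    rw [neg_div, Real.rpow_neg (by positivity), Real.rpow_neg (by positivity), ← div_eq_mul_inv,
      ← Real.div_rpow (by positivity) (by positivity), ← Real.inv_rpow (by positivity)]
    congr 1
    field_simp
  have hexponent : -‖y‖ ^ 2 / (2 * t) =
      -((1 / (2 * t) - 1 / (2 * s)) * ‖y‖ ^ 2) + -‖y‖ ^ 2 / (2 * s) := by
    ring
  rw [heatKernel, heatKernel, hfactor, hexponent, Real.exp_add]
  ring

theorem norm_sq_mul_heatKernel_le (ht : 0 < t) (y : EuclideanSpace ℝ (Fin d)) :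
    ‖y‖ ^ 2 * heatKernel d t y ≤ 4 * 2 ^ ((d : ℝ) / 2) * t * heatKernel d (2 * t) y := by
  have hscale : ‖y‖ ^ 2 * Real.exp (-(‖y‖ ^ 2 / (4 * t))) ≤ 4 * t := by
    have hle : ‖y‖ ^ 2 / (4 * t) * Real.exp (-(‖y‖ ^ 2 / (4 * t))) ≤ 1 :=
      (Real.mul_exp_neg_le_exp_neg_one _).trans (Real.exp_le_one_iff.2 (by norm_num))
    rwa [div_mul_eq_mul_div, div_le_one (by positivity)] at hle
  have hexponent : (1 / (2 * t) - 1 / (2 * (2 * t))) * ‖y‖ ^ 2 = ‖y‖ ^ 2 / (4 * t) := by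
    field_simp
    ring
  have := heatKernel_nonneg (mul_pos two_pos ht).le y
  rw [heatKernel_eq_mul_heatKernel (mul_pos two_pos ht) ht y, hexponent,
    mul_div_cancel_right₀ _ ht.ne']
  calc _ = 2 ^ ((d : ℝ) / 2) * (‖y‖ ^ 2 * Real.exp (-(‖y‖ ^ 2 / (4 * t)))) *
        heatKernel d (2 * t) y := by ring
    _ ≤ 2 ^ ((d : ℝ) / 2) * (4 * t) * heatKernel d (2 * t) y := by gcongr
    _ = 4 * 2 ^ ((d : ℝ) / 2) * t * heatKernel d (2 * t) y := by ring

theorem heatKernel_le_of_le_norm (ht : 0 < t) (hts : 2 * t ≤ s) {r : ℝ} (hr : 0 ≤ r)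
    {y : EuclideanSpace ℝ (Fin d)} (hy : r ≤ ‖y‖) :
    heatKernel d t y ≤
      (s / t) ^ ((d : ℝ) / 2) * Real.exp (-(r ^ 2 / (4 * t))) * heatKernel d s y := by
  have hs : 0 < s := by linarith
  have hrate : 1 / (4 * t) ≤ 1 / (2 * t) - 1 / (2 * s) := by
    have : 1 / (2 * s) ≤ 1 / (4 * t) := one_div_le_one_div_of_le (by positivity) (by linarith)
    have : 1 / (2 * t) = 1 / (4 * t) + 1 / (4 * t) := by field_simp; norm_num
    linarith
  have : 0 ≤ 1 / (2 * t) - 1 / (2 * s) := hrate.trans' (by positivity)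
  have := heatKernel_nonneg hs.le y
  rw [heatKernel_eq_mul_heatKernel hs ht y, ← one_div_mul_eq_div (4 * t)]
  gcongr

theorem heatKernel_half_le (hs : 0 < s) (x y : EuclideanSpace ℝ (Fin d)) :
    heatKernel d (s / 2) y ≤
      2 ^ ((d : ℝ) / 2) * Real.exp (‖x‖ ^ 2 / s) * heatKernel d s (x + y) := by
  have hnorm : ‖x + y‖ ^ 2 ≤ 2 * (‖x‖ ^ 2 + ‖y‖ ^ 2) :=
    (pow_le_pow_left₀ (norm_nonneg _) (norm_add_le x y) 2).trans add_sq_le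
  have hexponent : -((1 / (2 * (s / 2)) - 1 / (2 * s)) * ‖y‖ ^ 2) + -‖y‖ ^ 2 / (2 * s) ≤
      ‖x‖ ^ 2 / s + -‖x + y‖ ^ 2 / (2 * s) := by
    field_simp
    linarith
  rw [heatKernel_eq_mul_heatKernel hs (half_pos hs), div_div_cancel₀ hs.ne', heatKernel, heatKernel]
  calc _ = 2 ^ ((d : ℝ) / 2) * (2 * Real.pi * s) ^ (-(d : ℝ) / 2) *
        Real.exp (-((1 / (2 * (s / 2)) - 1 / (2 * s)) * ‖y‖ ^ 2) + -‖y‖ ^ 2 / (2 * s)) := by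
        rw [Real.exp_add]
        ring
    _ ≤ 2 ^ ((d : ℝ) / 2) * (2 * Real.pi * s) ^ (-(d : ℝ) / 2) *
        Real.exp (‖x‖ ^ 2 / s + -‖x + y‖ ^ 2 / (2 * s)) := by gcongr
    _ = _ := by
        rw [Real.exp_add]
        ring

theorem integrable_norm_sq_mul_heatKernel (d : ℕ) (ht : 0 < t) :
    Integrable fun y : EuclideanSpace ℝ (Fin d) => ‖y‖ ^ 2 * heatKernel d t y := by
  refine ((integrable_heatKernel d (mul_pos two_pos ht)).const_mul
    (4 * 2 ^ ((d : ℝ) / 2) * t)).mono' ?_ (.of_forall fun y => ?_)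
  · exact ((continuous_norm.pow 2).mul (continuous_heatKernel d t)).aestronglyMeasurable
  · rw [Real.norm_of_nonneg (mul_nonneg (sq_nonneg _) (heatKernel_nonneg ht.le y))]
    exact norm_sq_mul_heatKernel_le ht y

theorem integral_norm_sq_mul_heatKernel_le (d : ℕ) (ht : 0 < t) :
    ∫ y : EuclideanSpace ℝ (Fin d), ‖y‖ ^ 2 * heatKernel d t y ≤ 4 * 2 ^ ((d : ℝ) / 2) * t := by
  calc _ ≤ ∫ y, 4 * 2 ^ ((d : ℝ) / 2) * t * heatKernel d (2 * t) y :=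
        integral_mono (integrable_norm_sq_mul_heatKernel d ht)
          ((integrable_heatKernel d (mul_pos two_pos ht)).const_mul _)
          (norm_sq_mul_heatKernel_le ht)
    _ = 4 * 2 ^ ((d : ℝ) / 2) * t := by
        rw [integral_const_mul, integral_heatKernel d (mul_pos two_pos ht), mul_one]

theorem integrable_mul_heatKernel_of_abs_le (ht : 0 < t) (hu : AEStronglyMeasurable u)
    {a b : ℝ} (hle : ∀ y, |u y| ≤ a + b * ‖y‖ ^ 2) :
    Integrable fun y => u y * heatKernel d t y := by
  refine (((integrable_heatKernel d ht).const_mul a).add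
    ((integrable_norm_sq_mul_heatKernel d ht).const_mul b)).mono'
    (hu.mul (continuous_heatKernel d t).aestronglyMeasurable) (.of_forall fun y => ?_)
  have := heatKernel_nonneg ht.le y
  calc ‖u y * heatKernel d t y‖ = |u y| * heatKernel d t y := by
        rw [norm_mul, Real.norm_of_nonneg this, Real.norm_eq_abs]
    _ ≤ (a + b * ‖y‖ ^ 2) * heatKernel d t y := by gcongr; exact hle y
    _ = a * heatKernel d t y + b * (‖y‖ ^ 2 * heatKernel d t y) := by ring

theorem integrable_comp_const_add_mul_heatKernel_half (hs : 0 < s) (hu : AEStronglyMeasurable u)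
    (hint : Integrable fun y => u y * heatKernel d s y) (x : EuclideanSpace ℝ (Fin d)) :
    Integrable fun y => u (x + y) * heatKernel d (s / 2) y := by
  have hux : AEStronglyMeasurable fun y => u (x + y) :=
    hu.comp_measurePreserving (measurePreserving_add_left volume x)
  refine ((hint.comp_add_left x).norm.const_mul
    (2 ^ ((d : ℝ) / 2) * Real.exp (‖x‖ ^ 2 / s))).mono'
    (hux.mul (continuous_heatKernel d (s / 2)).aestronglyMeasurable) (.of_forall fun y => ?_)
  rw [norm_mul, norm_mul, Real.norm_of_nonneg (heatKernel_nonneg hs.le _),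
    Real.norm_of_nonneg (heatKernel_nonneg (half_pos hs).le y), mul_left_comm]
  exact mul_le_mul_of_nonneg_left (heatKernel_half_le hs x y) (norm_nonneg _)

theorem tendsto_one_div_mul_rpow_mul_exp_neg_div (hs : 0 ≤ s) (a : ℝ) {b : ℝ} (hb : 0 < b) :
    Tendsto (fun t => 1 / t * ((s / t) ^ a * Real.exp (-(b / t)))) (𝓝[>] 0) (𝓝 0) := by
  have hlim := ((tendsto_rpow_mul_exp_neg_mul_atTop_nhds_zero (a + 1) b hb).comp
    tendsto_inv_nhdsGT_zero).const_mul (s ^ a)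
  rw [mul_zero] at hlim
  refine hlim.congr' ?_
  filter_upwards [self_mem_nhdsWithin] with t (ht : 0 < t)
  have hinv : 0 < t⁻¹ := inv_pos.2 ht
  rw [Function.comp_apply, Real.rpow_add_one hinv.ne', div_eq_mul_inv s t,
    Real.mul_rpow hs hinv.le, div_eq_mul_inv b t, one_div, neg_mul]
  ring

theorem abs_mul_heatKernel_le (ht : 0 < t) (hts : 2 * t ≤ s) {κ r : ℝ} (hκ : 0 ≤ κ) (hr : 0 ≤ r)
    (hu : ∀ y, ‖y‖ < r → |u y| ≤ κ * ‖y‖ ^ 2) (y : EuclideanSpace ℝ (Fin d)) :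
    |u y| * heatKernel d t y ≤ κ * (‖y‖ ^ 2 * heatKernel d t y) +
      (s / t) ^ ((d : ℝ) / 2) * Real.exp (-(r ^ 2 / (4 * t))) * (|u y| * heatKernel d s y) := by
  have hs : 0 < s := by linarith
  have ht0 := heatKernel_nonneg ht.le y
  have hs0 := heatKernel_nonneg hs.le y
  rcases lt_or_ge ‖y‖ r with hy | hy
  · calc |u y| * heatKernel d t y ≤ κ * ‖y‖ ^ 2 * heatKernel d t y := by gcongr; exact hu y hy
      _ = κ * (‖y‖ ^ 2 * heatKernel d t y) := mul_assoc _ _ _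
      _ ≤ _ := le_add_of_nonneg_right (by positivity)
  · calc |u y| * heatKernel d t y ≤ |u y| *
          ((s / t) ^ ((d : ℝ) / 2) * Real.exp (-(r ^ 2 / (4 * t))) * heatKernel d s y) := by
          gcongr
          exact heatKernel_le_of_le_norm ht hts hr hy
      _ = (s / t) ^ ((d : ℝ) / 2) * Real.exp (-(r ^ 2 / (4 * t))) *
          (|u y| * heatKernel d s y) := mul_left_comm _ _ _
      _ ≤ _ := le_add_of_nonneg_left (by positivity)

theorem integral_abs_mul_heatKernel_le (ht : 0 < t) (hts : 2 * t ≤ s) {κ r : ℝ}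
    (hκ : 0 ≤ κ) (hr : 0 ≤ r) (hu : ∀ y, ‖y‖ < r → |u y| ≤ κ * ‖y‖ ^ 2)
    (hint : Integrable fun y => u y * heatKernel d s y) :
    ∫ y, |u y| * heatKernel d t y ≤ κ * (4 * 2 ^ ((d : ℝ) / 2) * t) +
      (s / t) ^ ((d : ℝ) / 2) * Real.exp (-(r ^ 2 / (4 * t))) *
        ∫ y, |u y| * heatKernel d s y := by
  have hs : 0 < s := by linarith
  have hint_near := (integrable_norm_sq_mul_heatKernel d ht).const_mul κ
  have hint_abs : Integrable fun y => |u y| * heatKernel d s y :=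
    hint.norm.congr (.of_forall fun y => by
      simp only [norm_mul, Real.norm_eq_abs, abs_of_nonneg (heatKernel_nonneg hs.le y)])
  have hint_far := hint_abs.const_mul
    ((s / t) ^ ((d : ℝ) / 2) * Real.exp (-(r ^ 2 / (4 * t))))
  refine (integral_mono_of_nonneg
    (.of_forall fun y => mul_nonneg (abs_nonneg _) (heatKernel_nonneg ht.le y))
    (hint_near.add hint_far) (.of_forall (abs_mul_heatKernel_le ht hts hκ hr hu))).trans ?_
  simp only [Pi.add_apply]
  rw [integral_add hint_near hint_far, integral_const_mul, integral_const_mul]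
  gcongr
  exact integral_norm_sq_mul_heatKernel_le d ht

theorem tendsto_one_div_mul_integral_abs_mul_heatKernel (hs : 0 < s)
    (hu : u =o[𝓝 0] fun y => ‖y‖ ^ 2) (hint : Integrable fun y => u y * heatKernel d s y) :
    Tendsto (fun t => 1 / t * ∫ y, |u y| * heatKernel d t y) (𝓝[>] 0) (𝓝 0) := by
  refine tendsto_order.2 ⟨fun a ha => ?_, fun a ha => ?_⟩
  · filter_upwards [self_mem_nhdsWithin] with t (ht : 0 < t)
    exact ha.trans_le (mul_nonneg (one_div_pos.2 ht).le
      (integral_nonneg fun y => mul_nonneg (abs_nonneg _) (heatKernel_nonneg ht.le y)))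
  have hC : (0 : ℝ) < 4 * 2 ^ ((d : ℝ) / 2) := by positivity
  obtain ⟨κ, hκ, hκa⟩ : ∃ κ > 0, κ * (4 * 2 ^ ((d : ℝ) / 2)) < a :=
    ⟨a / 2 / (4 * 2 ^ ((d : ℝ) / 2)), by positivity, by
      rw [div_mul_cancel₀ _ hC.ne']; exact half_lt_self ha⟩
  obtain ⟨r, hr, hball⟩ := Metric.eventually_nhds_iff_ball.1 (Asymptotics.isLittleO_iff.1 hu hκ)
  have htail := (tendsto_one_div_mul_rpow_mul_exp_neg_div hs.le ((d : ℝ) / 2)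
    (b := r ^ 2 / 4) (by positivity)).mul_const (∫ y, |u y| * heatKernel d s y)
  rw [zero_mul] at htail
  filter_upwards [htail.eventually_lt_const (sub_pos.2 hκa), Ioc_mem_nhdsGT (half_pos hs)]
    with t hlt ht
  have ht0 : 0 < t := ht.1
  have hle := integral_abs_mul_heatKernel_le ht0 (by linarith [ht.2]) hκ.le hr.le
    (fun y hy => by simpa using hball y (mem_ball_zero_iff.2 hy)) hint
  calc _ ≤ 1 / t * (κ * (4 * 2 ^ ((d : ℝ) / 2) * t) +
        (s / t) ^ ((d : ℝ) / 2) * Real.exp (-(r ^ 2 / (4 * t))) *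
          ∫ y, |u y| * heatKernel d s y) := by gcongr
    _ = κ * (4 * 2 ^ ((d : ℝ) / 2)) + 1 / t * ((s / t) ^ ((d : ℝ) / 2) *
        Real.exp (-(r ^ 2 / 4 / t))) * ∫ y, |u y| * heatKernel d s y := by
        rw [div_div (r ^ 2)]
        field_simp
    _ < a := by linarith

end HeatKernel

section Ito

variable {d : ℕ} {s : ℝ} {f : EuclideanSpace ℝ (Fin d) → ℝ}

theorem le_one_add_sq (a : ℝ) : a ≤ 1 + a ^ 2 := by
  linarith [sq_nonneg (a - 1), sq_nonneg a]

theorem integrable_mul_heatKernel_of_abs_le_linear (hs : 0 < s) (hf : AEStronglyMeasurable f)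
    {A B : ℝ} (hgrowth : ∀ y, |f y| ≤ A * ‖y‖ + B) :
    Integrable fun y => f y * heatKernel d s y :=
  integrable_mul_heatKernel_of_abs_le (a := |A| + B) (b := |A|) hs hf fun y =>
    calc |f y| ≤ A * ‖y‖ + B := hgrowth y
      _ ≤ |A| * (1 + ‖y‖ ^ 2) + B := by
          gcongr
          exacts [le_abs_self A, le_one_add_sq _]
      _ = |A| + B + |A| * ‖y‖ ^ 2 := by ring

theorem integrable_taylorRemainder_mul_heatKernel (hs : 0 < s) (hf : AEStronglyMeasurable f)
    (hint : Integrable fun y => f y * heatKernel d s y) (x v : EuclideanSpace ℝ (Fin d))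
    (M : Matrix (Fin d) (Fin d) ℝ) :
    Integrable fun y =>
      (f (x + y) - f x - ⟪v, y⟫ - 1 / 2 * quadForm d M y) * heatKernel d (s / 2) y := by
  have hpoly_le (y : EuclideanSpace ℝ (Fin d)) : |f x + ⟪v, y⟫ + 1 / 2 * quadForm d M y| ≤
      |f x| + ‖v‖ + (‖v‖ + 1 / 2 * ∑ i, ∑ j, |M i j|) * ‖y‖ ^ 2 := by
    have hquad : |1 / 2 * quadForm d M y| ≤ 1 / 2 * ((∑ i, ∑ j, |M i j|) * ‖y‖ ^ 2) := by
      rw [abs_mul, abs_of_pos one_half_pos]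
      gcongr
      exact abs_quadForm_le M y
    calc _ ≤ |f x| + |⟪v, y⟫| + |1 / 2 * quadForm d M y| := abs_add_three _ _ _
      _ ≤ |f x| + ‖v‖ * (1 + ‖y‖ ^ 2) + 1 / 2 * ((∑ i, ∑ j, |M i j|) * ‖y‖ ^ 2) := by
          gcongr
          exact (abs_real_inner_le_norm v y).trans (by gcongr; exact le_one_add_sq _)
      _ = _ := by ring
  have hpoly : Continuous fun y => f x + ⟪v, y⟫ + 1 / 2 * quadForm d M y := by
    have := continuous_quadForm M
    fun_prop
  refine ((integrable_comp_const_add_mul_heatKernel_half hs hf hint x).sub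
    (integrable_mul_heatKernel_of_abs_le (half_pos hs) hpoly.aestronglyMeasurable
      hpoly_le)).congr (.of_forall fun y => ?_)
  simp only [Pi.sub_apply]
  ring

theorem ito_like_lemma_for_convex_functions_general (hf : ConvexOn ℝ Set.univ f) (hs : 0 < s)
    (hint : Integrable fun y => f y * heatKernel d s y)
    {μp μn : Fin d → Fin d → Measure (EuclideanSpace ℝ (Fin d))}
    (hμ : IsSecondDerivMeasures d f μp μn) :
    ∀ᵐ x, ∀ v, (∀ y, f x + ⟪v, y - x⟫ ≤ f y) →
      Tendsto (fun t => 1 / t * ∫ y, |f (x + y) - f x - ⟪v, y⟫ -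
        1 / 2 * quadForm d (densityMatrix d μp μn x) y| * heatKernel d t y) (𝓝[>] 0) (𝓝 0) := by
  filter_upwards [hμ.ae_isLittleO hf] with x hx v hv
  exact tendsto_one_div_mul_integral_abs_mul_heatKernel (half_pos hs) (hx v hv)
    (integrable_taylorRemainder_mul_heatKernel hs
      hf.locallyLipschitz.continuous.aestronglyMeasurable hint x v _)

end Ito

/-- Itô-like lemma for convex functions. -/
theorem ito_like_lemma_for_convex_functions (d : ℕ)
    (f : EuclideanSpace ℝ (Fin d) → ℝ) (hf : ConvexOn ℝ Set.univ f)
    (A B : ℝ) (hgrowth : ∀ y, |f y| ≤ A * ‖y‖ + B)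
    (p : EuclideanSpace ℝ (Fin d) → EuclideanSpace ℝ (Fin d))
    (hp : ∀ x y, f x + ⟪p x, y - x⟫ ≤ f y)
    (μp μn : Fin d → Fin d → Measure (EuclideanSpace ℝ (Fin d)))
    (hμ : IsSecondDerivMeasures d f μp μn) :
    ∀ᵐ x ∂(volume : Measure (EuclideanSpace ℝ (Fin d))),
      Filter.Tendsto
        (fun t : ℝ => (1 / t) *
          ∫ y, |f (x + y) - f x - ⟪p x, y⟫ -
            (1 / 2) * quadForm d (densityMatrix d μp μn x) y| * heatKernel d t y)
        (nhdsWithin 0 (Set.Ioi 0)) (nhds 0) := by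
  filter_upwards [ito_like_lemma_for_convex_functions_general hf one_pos
    (integrable_mul_heatKernel_of_abs_le_linear one_pos
      hf.locallyLipschitz.continuous.aestronglyMeasurable hgrowth) hμ] with x hx
  exact hx (p x) (hp x)
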